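/- Let A, B, C be a maximal positive solution of the SL(2,ℝ) negative cross curvature flow ODE system with B_0 > C_0 > 0, A_0 > 0, and suppose that at t = 0 the ratios a = A/B and c = C/B satisfy a ≤ (1/3)(2 sqrt(1 - c + c^2) - 1 - c) (equivalently F_1(0) ≥ 0). Then there exists a time t_1 > 0 in the interval of existence at which F_1(t_1) < 0 and F_2(t_1) < 0; i.e., the condition F_1 ≥ 0 cannot persist for the whole interval of existence. -/

import Mathlib

/-- `F1 = -3A² + B² + C² - 2BC - 2AC - 2AB` for the `SL(2,ℝ)` cross curvature tensor. -/
def sl2F1 (A B C : ℝ) : ℝ :=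
  -3 * A ^ 2 + B ^ 2 + C ^ 2 - 2 * B * C - 2 * A * C - 2 * A * B

/-- `F2 = -3B² + A² + C² + 2BC + 2AC - 2AB` for the `SL(2,ℝ)` cross curvature tensor. -/
def sl2F2 (A B C : ℝ) : ℝ :=
  -3 * B ^ 2 + A ^ 2 + C ^ 2 + 2 * B * C + 2 * A * C - 2 * A * B

/-- `F3 = -3C² + A² + B² + 2BC - 2AC + 2AB` for the `SL(2,ℝ)` cross curvature tensor. -/
def sl2F3 (A B C : ℝ) : ℝ :=
  -3 * C ^ 2 + A ^ 2 + B ^ 2 + 2 * B * C - 2 * A * C + 2 * A * B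

/-- A triple of functions solves the `SL(2,ℝ)` negative cross curvature flow ODE system
(with positivity) on a set `s ⊆ ℝ`. -/
def IsSolSL2 (A B C : ℝ → ℝ) (s : Set ℝ) : Prop :=
  ∀ t ∈ s,
    (0 < A t ∧ 0 < B t ∧ 0 < C t) ∧
    HasDerivAt A
      (-2 * A t * sl2F2 (A t) (B t) (C t) * sl2F3 (A t) (B t) (C t) /
        (A t * B t * C t) ^ 2) t ∧
    HasDerivAt B
      (-2 * B t * sl2F3 (A t) (B t) (C t) * sl2F1 (A t) (B t) (C t) /
        (A t * B t * C t) ^ 2) t ∧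
    HasDerivAt C
      (-2 * C t * sl2F1 (A t) (B t) (C t) * sl2F2 (A t) (B t) (C t) /
        (A t * B t * C t) ^ 2) t

/-- A maximal solution of the `SL(2,ℝ)` system on `{t | 0 ≤ t, t < T}` (`T ∈ (0,∞]` an
extended real): a solution admitting no extension to a strictly larger interval. -/
def IsMaxSolSL2 (A B C : ℝ → ℝ) (T : EReal) : Prop :=
  IsSolSL2 A B C {t : ℝ | 0 ≤ t ∧ (t : EReal) < T} ∧
  ∀ (A' B' C' : ℝ → ℝ) (T' : EReal), T < T' →
    IsSolSL2 A' B' C' {t : ℝ | 0 ≤ t ∧ (t : EReal) < T'} →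
    ¬ (∀ t : ℝ, 0 ≤ t → (t : EReal) < T → A' t = A t ∧ B' t = B t ∧ C' t = C t)

/-!
Write `F₁ = (B - C)² - 2A(B + C) - 3A²`. On the cone `K = {F₁ ≥ 0, B ≥ C}` of the positive octant
this gives `A ≤ B - C`, and then `F₂ ≤ -A²` and `F₃ ≥ A²`. Two consequences follow.

* A solution can only leave `K` with `F₁` and `F₂` both negative, because `F₂ < 0` and `C < B` hold
  in a neighbourhood of every point of `K`.
* A maximal solution must leave `K`. Inside `K`, the functions `A` and `C` increase, `B` decreases,
  `A, C ≤ B` and `A' ≥ 2A³ / B⁴`. So `A` would outgrow `B` if the solution were defined for all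
  times, while on a bounded interval `A`, `B`, `C` would have positive limits at the final time, and
  Picard–Lindelöf would continue the solution beyond it.
-/

open Set Filter Topology

section Continuation

variable {E : Type*} [NormedAddCommGroup E] [NormedSpace ℝ E] {v : E → E} {γ : ℝ → E} {a T : ℝ}

lemma hasDerivWithinAt_Iic_of_tendsto_of_eventually_hasDerivAt (hv : ContinuousAt v (γ T))
    (hγ : ∀ᶠ t in 𝓝[<] T, HasDerivAt γ (v (γ t)) t) (hlim : Tendsto γ (𝓝[<] T) (𝓝 (γ T))) :
    HasDerivWithinAt γ (v (γ T)) (Iic T) T := by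
  have hs : {t | HasDerivAt γ (v (γ t)) t} ∩ Iio T ∈ 𝓝[<] T := inter_mem hγ self_mem_nhdsWithin
  refine hasDerivWithinAt_Iic_of_tendsto_deriv
    (fun t ht ↦ ht.1.differentiableAt.differentiableWithinAt)
    (hlim.mono_left (nhdsWithin_mono T inter_subset_right)) hs ?_
  refine (hv.tendsto.comp hlim).congr' ?_
  filter_upwards [hγ] with t ht using ht.deriv.symm

variable [CompleteSpace E] {x₀ : E}

lemma exists_hasDerivAt_extension_of_tendsto (hv : ContDiffAt ℝ 1 v x₀) (haT : a < T)
    (hγ : ∀ t ∈ Ico a T, HasDerivAt γ (v (γ t)) t) (hlim : Tendsto γ (𝓝[<] T) (𝓝 x₀)) :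
    ∃ η : ℝ → E, EqOn η γ (Iio T) ∧ η T = x₀ ∧
      ∃ T' > T, ∀ t ∈ Ico a T', HasDerivAt η (v (η t)) t := by
  obtain ⟨α, hαT, ε, hε, hα⟩ :=
    hv.exists_forall_mem_closedBall_exists_eq_forall_mem_Ioo_hasDerivAt₀ T
  set η : ℝ → E := (Iio T).piecewise γ α
  have hηγ : EqOn η γ (Iio T) := piecewise_eqOn _ _ _
  have hηα : EqOn η α (Ici T) := compl_Iio (a := T) ▸ piecewise_eqOn_compl (Iio T) γ α
  have hηT : η T = x₀ := (hηα self_mem_Ici).trans hαT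
  have hη_before : ∀ t ∈ Ico a T, HasDerivAt η (v (η t)) t := fun t ht ↦ by
    rw [hηγ ht.2]
    exact (hγ t ht).congr_of_eventuallyEq (hηγ.eventuallyEq_of_mem (Iio_mem_nhds ht.2))
  refine ⟨η, hηγ, hηT, T + ε, by linarith, fun t ht ↦ ?_⟩
  rcases lt_trichotomy t T with htT | rfl | hTt
  · exact hη_before t ⟨ht.1, htT⟩
  · have hleft : HasDerivWithinAt η (v (η t)) (Iic t) t := by
      refine hasDerivWithinAt_Iic_of_tendsto_of_eventually_hasDerivAt (hηT ▸ hv.continuousAt) ?_ ?_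
      · filter_upwards [Ico_mem_nhdsLT haT] using hη_before
      · exact hηT ▸ hlim.congr' (hηγ.symm.eventuallyEq_of_mem self_mem_nhdsWithin)
    have hright : HasDerivWithinAt η (v (η t)) (Ici t) t := by
      rw [hηα self_mem_Ici]
      exact (hα t ⟨by linarith, by linarith⟩).hasDerivWithinAt.congr hηα (hηα self_mem_Ici)
    simpa using hleft.union hright
  · rw [hηα hTt.le]
    exact (hα t ⟨by linarith, ht.2⟩).congr_of_eventuallyEq
      (hηα.eventuallyEq_of_mem (Ici_mem_nhds hTt))

lemma exists_mem_hasDerivAt_extension_of_tendsto {U : Set E} (hU : U ∈ 𝓝 x₀)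
    (hv : ContDiffAt ℝ 1 v x₀) (haT : a < T)
    (hγ : ∀ t ∈ Ico a T, γ t ∈ U ∧ HasDerivAt γ (v (γ t)) t)
    (hlim : Tendsto γ (𝓝[<] T) (𝓝 x₀)) :
    ∃ η : ℝ → E, EqOn η γ (Iio T) ∧
      ∃ T' > T, ∀ t ∈ Ico a T', η t ∈ U ∧ HasDerivAt η (v (η t)) t := by
  obtain ⟨η, hηγ, hηT, T₁, hT₁, hη⟩ :=
    exists_hasDerivAt_extension_of_tendsto hv haT (fun t ht ↦ (hγ t ht).2) hlim
  have hηU : ∀ᶠ t in 𝓝[≥] T, η t ∈ U :=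
    nhdsWithin_le_nhds ((hη T ⟨haT.le, hT₁⟩).continuousAt.eventually_mem (hηT ▸ hU))
  obtain ⟨T₂, hT₂, hT₂U⟩ := mem_nhdsGE_iff_exists_Ico_subset.1 hηU
  refine ⟨η, hηγ, min T₁ T₂, lt_min hT₁ hT₂, fun t ht ↦ ⟨?_, ?_⟩⟩
  · rcases lt_or_ge t T with htT | hTt
    · exact hηγ htT ▸ (hγ t ⟨ht.1, htT⟩).1
    · exact hT₂U ⟨hTt, ht.2.trans_le (min_le_right _ _)⟩
  · exact hη t ⟨ht.1, ht.2.trans_le (min_le_left _ _)⟩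

end Continuation

/-- The right-hand side of the flow, as a vector field on the space of triples `(A, B, C)`; it is
only meaningful where `A B C ≠ 0`. -/
noncomputable def sl2Field (p : ℝ × ℝ × ℝ) : ℝ × ℝ × ℝ :=
  (-2 * p.1 * sl2F2 p.1 p.2.1 p.2.2 * sl2F3 p.1 p.2.1 p.2.2 / (p.1 * p.2.1 * p.2.2) ^ 2,
   -2 * p.2.1 * sl2F3 p.1 p.2.1 p.2.2 * sl2F1 p.1 p.2.1 p.2.2 / (p.1 * p.2.1 * p.2.2) ^ 2,
   -2 * p.2.2 * sl2F1 p.1 p.2.1 p.2.2 * sl2F2 p.1 p.2.1 p.2.2 / (p.1 * p.2.1 * p.2.2) ^ 2)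

/-- The open octant of triples with positive entries, the phase space of the flow. -/
def positiveOctant : Set (ℝ × ℝ × ℝ) := Ioi 0 ×ˢ Ioi 0 ×ˢ Ioi 0

lemma isOpen_positiveOctant : IsOpen positiveOctant :=
  isOpen_Ioi.prod (isOpen_Ioi.prod isOpen_Ioi)

lemma contDiffAt_sl2Field {n : WithTop ℕ∞} {p : ℝ × ℝ × ℝ} (hp : p.1 * p.2.1 * p.2.2 ≠ 0) :
    ContDiffAt ℝ n sl2Field p := by
  have hden : (p.1 * p.2.1 * p.2.2) ^ 2 ≠ 0 := pow_ne_zero 2 hp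
  unfold sl2Field sl2F1 sl2F2 sl2F3
  refine ContDiffAt.prodMk ?_ (ContDiffAt.prodMk ?_ ?_) <;>
    exact ContDiffAt.div (by fun_prop) (by fun_prop) hden

lemma isSolSL2_iff_hasDerivAt_sl2Field {A B C : ℝ → ℝ} {s : Set ℝ} :
    IsSolSL2 A B C s ↔ ∀ t ∈ s, (A t, B t, C t) ∈ positiveOctant ∧
      HasDerivAt (fun τ ↦ (A τ, B τ, C τ)) (sl2Field (A t, B t, C t)) t :=
  forall₂_congr fun _ _ ↦ and_congr Iff.rfl
    ⟨fun h ↦ h.1.prodMk (h.2.1.prodMk h.2.2), fun h ↦ ⟨h.fst, h.snd.fst, h.snd.snd⟩⟩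

lemma sl2F1_nonneg_iff_div_le {A B C : ℝ} (hA : 0 ≤ A) (hB : 0 < B) (hC : 0 ≤ C) :
    0 ≤ sl2F1 A B C ↔
      A / B ≤ 1 / 3 * (2 * Real.sqrt (1 - C / B + (C / B) ^ 2) - 1 - C / B) := by
  have hlhs_pos : 0 < (3 * (A / B) + 1 + C / B) / 2 := by positivity
  have hF1 : sl2F1 A B C = 4 / 3 * B ^ 2 *
      (1 - C / B + (C / B) ^ 2 - ((3 * (A / B) + 1 + C / B) / 2) ^ 2) := by
    unfold sl2F1
    field_simp
    ring
  calc 0 ≤ sl2F1 A B C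
      ↔ ((3 * (A / B) + 1 + C / B) / 2) ^ 2 ≤ 1 - C / B + (C / B) ^ 2 := by
        rw [hF1, mul_nonneg_iff_of_pos_left (by positivity), sub_nonneg]
    _ ↔ (3 * (A / B) + 1 + C / B) / 2 ≤ Real.sqrt (1 - C / B + (C / B) ^ 2) :=
        (Real.le_sqrt' hlhs_pos).symm
    _ ↔ A / B ≤ 1 / 3 * (2 * Real.sqrt (1 - C / B + (C / B) ^ 2) - 1 - C / B) := by
        constructor <;> intro h <;> linarith

/-- The cone `F₁ ≥ 0`, `C ≤ B` of the positive octant, in which the solutions under consideration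
start and which they have to leave. -/
structure InSL2Cone (A B C : ℝ) : Prop where
  A_pos : 0 < A
  C_pos : 0 < C
  C_le_B : C ≤ B
  F1_nonneg : 0 ≤ sl2F1 A B C

namespace InSL2Cone

variable {A B C : ℝ}

lemma B_pos (h : InSL2Cone A B C) : 0 < B := h.C_pos.trans_le h.C_le_B

lemma A_le_B_sub_C (h : InSL2Cone A B C) : A ≤ B - C := by
  have hF1 : sl2F1 A B C = (B - C) ^ 2 - A ^ 2 - 2 * A * (A + B + C) := by
    unfold sl2F1
    ring
  have hcross : 0 ≤ 2 * A * (A + B + C) := by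
    have := h.A_pos
    have := h.B_pos
    have := h.C_pos
    positivity
  refine le_of_sq_le_sq ?_ (sub_nonneg.2 h.C_le_B)
  linarith [h.F1_nonneg]

lemma C_lt_B (h : InSL2Cone A B C) : C < B := by
  linarith [h.A_le_B_sub_C, h.A_pos]

lemma A_lt_B (h : InSL2Cone A B C) : A < B := by
  linarith [h.A_le_B_sub_C, h.C_pos]

lemma F2_le_neg_sq (h : InSL2Cone A B C) : sl2F2 A B C ≤ -A ^ 2 := by
  have hF2 : sl2F2 A B C = -A ^ 2 - 2 * A * (B - C - A) - (B - C) * (3 * B + C) := by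
    unfold sl2F2
    ring
  have hgap : 0 ≤ 2 * A * (B - C - A) :=
    mul_nonneg (by linarith [h.A_pos]) (by linarith [h.A_le_B_sub_C])
  have hprod : 0 ≤ (B - C) * (3 * B + C) :=
    mul_nonneg (sub_nonneg.2 h.C_le_B) (by linarith [h.B_pos, h.C_pos])
  linarith

lemma sq_le_F3 (h : InSL2Cone A B C) : A ^ 2 ≤ sl2F3 A B C := by
  have hF3 : sl2F3 A B C = A ^ 2 + (B - C) * (2 * A + B + 3 * C) := by
    unfold sl2F3
    ring
  have hprod : 0 ≤ (B - C) * (2 * A + B + 3 * C) :=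
    mul_nonneg (sub_nonneg.2 h.C_le_B) (by linarith [h.A_pos, h.B_pos, h.C_pos])
  linarith

lemma F2_neg (h : InSL2Cone A B C) : sl2F2 A B C < 0 :=
  h.F2_le_neg_sq.trans_lt (neg_lt_zero.2 (pow_pos h.A_pos 2))

lemma F3_pos (h : InSL2Cone A B C) : 0 < sl2F3 A B C :=
  (pow_pos h.A_pos 2).trans_le h.sq_le_F3

lemma two_mul_cube_div_le_sl2Field_fst (h : InSL2Cone A B C) :
    2 * A ^ 3 / B ^ 4 ≤ (sl2Field (A, B, C)).1 := by
  have hA := h.A_pos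
  have hB := h.B_pos
  have hC := h.C_pos
  have hCB := h.C_le_B
  have hF2 : A ^ 2 ≤ -sl2F2 A B C := le_neg_of_le_neg h.F2_le_neg_sq
  have hF2_nonneg : 0 ≤ -sl2F2 A B C := neg_nonneg.2 h.F2_neg.le
  have hF3 := h.sq_le_F3
  have hF3_pos := h.F3_pos
  calc 2 * A ^ 3 / B ^ 4 = 2 * A * A ^ 2 * A ^ 2 / (A * B * B) ^ 2 := by field_simp
    _ ≤ 2 * A * -sl2F2 A B C * sl2F3 A B C / (A * B * C) ^ 2 := by gcongr
    _ = (sl2Field (A, B, C)).1 := by simp only [sl2Field]; ring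

lemma sl2Field_snd_fst_nonpos (h : InSL2Cone A B C) : (sl2Field (A, B, C)).2.1 ≤ 0 := by
  have hnum : 0 ≤ B * sl2F3 A B C * sl2F1 A B C :=
    mul_nonneg (mul_nonneg h.B_pos.le h.F3_pos.le) h.F1_nonneg
  exact div_nonpos_of_nonpos_of_nonneg (by linarith) (sq_nonneg _)

lemma sl2Field_snd_snd_nonneg (h : InSL2Cone A B C) : 0 ≤ (sl2Field (A, B, C)).2.2 := by
  have hnum : C * sl2F1 A B C * sl2F2 A B C ≤ 0 :=
    mul_nonpos_of_nonneg_of_nonpos (mul_nonneg h.C_pos.le h.F1_nonneg) h.F2_neg.le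
  exact div_nonneg (by linarith) (sq_nonneg _)

lemma eventually_inSL2Cone_or_F1_neg_and_F2_neg (h : InSL2Cone A B C) :
    ∀ᶠ p : ℝ × ℝ × ℝ in 𝓝 (A, B, C), InSL2Cone p.1 p.2.1 p.2.2 ∨
      sl2F1 p.1 p.2.1 p.2.2 < 0 ∧ sl2F2 p.1 p.2.1 p.2.2 < 0 := by
  have hF2 : Continuous fun p : ℝ × ℝ × ℝ ↦ sl2F2 p.1 p.2.1 p.2.2 := by
    unfold sl2F2
    fun_prop
  filter_upwards [isOpen_positiveOctant.mem_nhds ⟨h.A_pos, h.B_pos, h.C_pos⟩,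
    (isOpen_lt continuous_snd.snd continuous_snd.fst).mem_nhds h.C_lt_B,
    (isOpen_lt hF2 continuous_const).mem_nhds h.F2_neg] with p hp hCB hF2_neg
  rcases le_or_gt 0 (sl2F1 p.1 p.2.1 p.2.2) with hF1 | hF1
  · exact .inl ⟨hp.1, hp.2.2, le_of_lt hCB, hF1⟩
  · exact .inr ⟨hF1, hF2_neg⟩

end InSL2Cone

namespace IsSolSL2

variable {A B C : ℝ → ℝ} {s : Set ℝ} {a b T : ℝ}

lemma continuousOn (hsol : IsSolSL2 A B C s) : ContinuousOn (fun t ↦ (A t, B t, C t)) s :=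
  fun t ht ↦ (isSolSL2_iff_hasDerivAt_sl2Field.1 hsol t ht).2.continuousAt.continuousWithinAt

lemma isClosed_setOf_inSL2Cone_inter (hs : IsClosed s) (hsol : IsSolSL2 A B C s) :
    IsClosed ({t | InSL2Cone (A t) (B t) (C t)} ∩ s) := by
  have hF1 : Continuous fun p : ℝ × ℝ × ℝ ↦ sl2F1 p.1 p.2.1 p.2.2 := by
    unfold sl2F1
    fun_prop
  have hclosed : IsClosed {p : ℝ × ℝ × ℝ | p.2.2 ≤ p.2.1 ∧ 0 ≤ sl2F1 p.1 p.2.1 p.2.2} :=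
    (isClosed_le continuous_snd.snd continuous_snd.fst).inter (isClosed_le continuous_const hF1)
  convert hsol.continuousOn.preimage_isClosed_of_isClosed hs hclosed using 1
  ext t
  exact ⟨fun ⟨hcone, ht⟩ ↦ ⟨ht, hcone.C_le_B, hcone.F1_nonneg⟩,
    fun ⟨ht, hCB, hF1_nonneg⟩ ↦ ⟨⟨(hsol t ht).1.1, (hsol t ht).1.2.2, hCB, hF1_nonneg⟩, ht⟩⟩

lemma exists_F1_neg_and_F2_neg_of_not_inSL2Cone (hab : a ≤ b) (hsol : IsSolSL2 A B C (Icc a b))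
    (ha : InSL2Cone (A a) (B a) (C a)) (hb : ¬ InSL2Cone (A b) (B b) (C b)) :
    ∃ t ∈ Ioc a b, sl2F1 (A t) (B t) (C t) < 0 ∧ sl2F2 (A t) (B t) (C t) < 0 := by
  by_contra! hneg
  refine hb ((hsol.isClosed_setOf_inSL2Cone_inter isClosed_Icc).Icc_subset_of_forall_mem_nhdsWithin
    ha ?_ (right_mem_Icc.2 hab))
  rintro x ⟨hx, hxab⟩
  have hcont : ContinuousAt (fun t ↦ (A t, B t, C t)) x :=
    (isSolSL2_iff_hasDerivAt_sl2Field.1 hsol x (Ico_subset_Icc_self hxab)).2.continuousAt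
  filter_upwards [nhdsWithin_le_nhds
    (hcont.eventually hx.eventually_inSL2Cone_or_F1_neg_and_F2_neg),
    Ioo_mem_nhdsGT hxab.2] with t hcone_or_neg ht
  exact hcone_or_neg.resolve_right fun h ↦
    (hneg t ⟨hxab.1.trans_lt ht.1, ht.2.le⟩ h.1).not_gt h.2

lemma monotoneOn_A_of_inSL2Cone (hsol : IsSolSL2 A B C s) (hs : Convex ℝ s)
    (hcone : ∀ t ∈ s, InSL2Cone (A t) (B t) (C t)) : MonotoneOn A s :=
  monotoneOn_of_hasDerivWithinAt_nonneg hs hsol.continuousOn.fst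
    (fun t ht ↦ (hsol t (interior_subset ht)).2.1.hasDerivWithinAt)
    fun t ht ↦ by
      have h := hcone t (interior_subset ht)
      have := h.A_pos
      exact le_trans (by positivity) h.two_mul_cube_div_le_sl2Field_fst

lemma antitoneOn_B_of_inSL2Cone (hsol : IsSolSL2 A B C s) (hs : Convex ℝ s)
    (hcone : ∀ t ∈ s, InSL2Cone (A t) (B t) (C t)) : AntitoneOn B s :=
  antitoneOn_of_hasDerivWithinAt_nonpos hs hsol.continuousOn.snd.fst
    (fun t ht ↦ (hsol t (interior_subset ht)).2.2.1.hasDerivWithinAt)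
    fun t ht ↦ (hcone t (interior_subset ht)).sl2Field_snd_fst_nonpos

lemma monotoneOn_C_of_inSL2Cone (hsol : IsSolSL2 A B C s) (hs : Convex ℝ s)
    (hcone : ∀ t ∈ s, InSL2Cone (A t) (B t) (C t)) : MonotoneOn C s :=
  monotoneOn_of_hasDerivWithinAt_nonneg hs hsol.continuousOn.snd.snd
    (fun t ht ↦ (hsol t (interior_subset ht)).2.2.2.hasDerivWithinAt)
    fun t ht ↦ (hcone t (interior_subset ht)).sl2Field_snd_snd_nonneg

lemma exists_not_inSL2Cone_of_Ici (hsol : IsSolSL2 A B C (Ici a)) :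
    ∃ t ∈ Ici a, ¬ InSL2Cone (A t) (B t) (C t) := by
  by_contra! hcone
  have hA := hsol.monotoneOn_A_of_inSL2Cone (convex_Ici a) hcone
  have hB := hsol.antitoneOn_B_of_inSL2Cone (convex_Ici a) hcone
  obtain ⟨⟨hAa, hBa, -⟩, -⟩ := hsol a self_mem_Ici
  set k := 2 * A a ^ 3 / B a ^ 4
  have hk : 0 < k := by positivity
  have hderiv : ∀ t ∈ Ici a, k ≤ deriv A t := fun t ht ↦ by
    have hAt := hA self_mem_Ici ht ht
    have hBt := hB self_mem_Ici ht ht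
    obtain ⟨⟨hAt_pos, hBt_pos, -⟩, hA', -⟩ := hsol t ht
    calc k = 2 * A a ^ 3 / B a ^ 4 := rfl
      _ ≤ 2 * A t ^ 3 / B t ^ 4 := by gcongr
      _ ≤ (sl2Field (A t, B t, C t)).1 := (hcone t ht).two_mul_cube_div_le_sl2Field_fst
      _ = deriv A t := hA'.deriv.symm
  have hb : a ≤ a + B a / k := le_add_of_nonneg_right (by positivity)
  have hgrowth := (convex_Ici a).mul_sub_le_image_sub_of_le_deriv hsol.continuousOn.fst
    (fun t ht ↦ (hsol t (interior_subset ht)).2.1.differentiableAt.differentiableWithinAt)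
    (fun t ht ↦ hderiv t (interior_subset ht)) a self_mem_Ici _ hb hb
  rw [add_sub_cancel_left, mul_div_cancel₀ _ hk.ne'] at hgrowth
  linarith [(hcone _ hb).A_lt_B, hB self_mem_Ici hb hb]

lemma exists_tendsto_of_inSL2Cone (haT : a < T) (hsol : IsSolSL2 A B C (Ico a T))
    (hcone : ∀ t ∈ Ico a T, InSL2Cone (A t) (B t) (C t)) :
    ∃ p ∈ positiveOctant, Tendsto (fun t ↦ (A t, B t, C t)) (𝓝[<] T) (𝓝 p) := by
  have hA := hsol.monotoneOn_A_of_inSL2Cone (convex_Ico a T) hcone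
  have hB := hsol.antitoneOn_B_of_inSL2Cone (convex_Ico a T) hcone
  have hC := hsol.monotoneOn_C_of_inSL2Cone (convex_Ico a T) hcone
  have haIco : a ∈ Ico a T := left_mem_Ico.2 haT
  have hA_ge : ∀ t ∈ Ico a T, A a ≤ A t := fun t ht ↦ hA haIco ht ht.1
  have hB_le : ∀ t ∈ Ico a T, B t ≤ B a := fun t ht ↦ hB haIco ht ht.1
  have hC_ge : ∀ t ∈ Ico a T, C a ≤ C t := fun t ht ↦ hC haIco ht ht.1
  have hB_ge : ∀ t ∈ Ico a T, A a ≤ B t := fun t ht ↦ (hA_ge t ht).trans (hcone t ht).A_lt_B.le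
  have hsub : Ioo a T ⊆ Ico a T := Ioo_subset_Ico_self
  have hne : (Ioo a T).Nonempty := nonempty_Ioo.2 haT
  have hA_lim := (hA.mono hsub).tendsto_nhdsWithin_Ioo_left hne
    ⟨B a, forall_mem_image.2 fun t ht ↦
      (hcone t (hsub ht)).A_lt_B.le.trans (hB_le t (hsub ht))⟩
  have hB_lim := (hB.mono hsub).tendsto_nhdsWithin_Ioo_left hne
    ⟨A a, forall_mem_image.2 fun t ht ↦ hB_ge t (hsub ht)⟩
  have hC_lim := (hC.mono hsub).tendsto_nhdsWithin_Ioo_left hne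
    ⟨B a, forall_mem_image.2 fun t ht ↦ (hcone t (hsub ht)).C_le_B.trans (hB_le t (hsub ht))⟩
  have hnear : ∀ᶠ t in 𝓝[<] T, t ∈ Ico a T := Ico_mem_nhdsLT haT
  have hAa := (hcone a haIco).A_pos
  exact ⟨_, ⟨hAa.trans_le (ge_of_tendsto hA_lim (hnear.mono hA_ge)),
    hAa.trans_le (ge_of_tendsto hB_lim (hnear.mono hB_ge)),
    (hcone a haIco).C_pos.trans_le (ge_of_tendsto hC_lim (hnear.mono hC_ge))⟩,
    hA_lim.prodMk_nhds (hB_lim.prodMk_nhds hC_lim)⟩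

lemma exists_extension_of_tendsto (haT : a < T) (hsol : IsSolSL2 A B C (Ico a T))
    {p : ℝ × ℝ × ℝ} (hp : p ∈ positiveOctant)
    (hlim : Tendsto (fun t ↦ (A t, B t, C t)) (𝓝[<] T) (𝓝 p)) :
    ∃ A' B' C' : ℝ → ℝ, ∃ T' > T, IsSolSL2 A' B' C' (Ico a T') ∧
      ∀ t < T, A' t = A t ∧ B' t = B t ∧ C' t = C t := by
  have hp_ne : p.1 * p.2.1 * p.2.2 ≠ 0 := (mul_pos (mul_pos hp.1 hp.2.1) hp.2.2).ne'
  obtain ⟨η, hη_eq, T', hT', hη⟩ :=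
    exists_mem_hasDerivAt_extension_of_tendsto (isOpen_positiveOctant.mem_nhds hp)
      (contDiffAt_sl2Field hp_ne) haT (isSolSL2_iff_hasDerivAt_sl2Field.1 hsol) hlim
  refine ⟨fun t ↦ (η t).1, fun t ↦ (η t).2.1, fun t ↦ (η t).2.2, T', hT',
    isSolSL2_iff_hasDerivAt_sl2Field.2 hη, fun t ht ↦ ?_⟩
  simp [hη_eq (mem_Iio.2 ht)]

end IsSolSL2

lemma IsMaxSolSL2.exists_not_inSL2Cone {A B C : ℝ → ℝ} {T : EReal} (hT : 0 < T)
    (hmax : IsMaxSolSL2 A B C T) :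
    ∃ t : ℝ, 0 ≤ t ∧ (t : EReal) < T ∧ ¬ InSL2Cone (A t) (B t) (C t) := by
  obtain ⟨hsol, hmaximal⟩ := hmax
  induction T with
  | bot => exact absurd hT not_lt_bot
  | top =>
    have hsol_Ici : IsSolSL2 A B C (Ici 0) := fun t ht ↦ hsol t ⟨ht, EReal.coe_lt_top t⟩
    obtain ⟨t, ht, hnot⟩ := hsol_Ici.exists_not_inSL2Cone_of_Ici
    exact ⟨t, ht, EReal.coe_lt_top t, hnot⟩
  | coe T =>
    simp only [EReal.coe_lt_coe_iff] at hsol hmaximal ⊢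
    by_contra! hcone
    have hT_pos : 0 < T := EReal.coe_pos.1 hT
    obtain ⟨p, hp, hlim⟩ :=
      IsSolSL2.exists_tendsto_of_inSL2Cone hT_pos hsol fun t ht ↦ hcone t ht.1 ht.2
    obtain ⟨A', B', C', T', hTT', hsol', heq⟩ :=
      IsSolSL2.exists_extension_of_tendsto hT_pos hsol hp hlim
    exact hmaximal A' B' C' T' (EReal.coe_lt_coe_iff.2 hTT')
      (fun t ht ↦ hsol' t ⟨ht.1, EReal.coe_lt_coe_iff.1 ht.2⟩) fun t _ ht ↦ heq t ht

/-- For a maximal positive solution of the `SL(2,ℝ)` negative cross curvature flow with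
`B0 > C0 > 0`, `A0 > 0` and initial ratios `a = A0/B0`, `c = C0/B0` satisfying
`a ≤ (1/3)(2√(1-c+c²) - 1 - c)` (equivalently `F1(0) ≥ 0`): there is a time `t1 > 0`
in the interval of existence at which `F1(t1) < 0` and `F2(t1) < 0`; i.e. the condition
`F1 ≥ 0` cannot persist. -/
theorem sl2_F1_nonneg_not_persistent
    (A0 B0 C0 : ℝ) (hA0 : 0 < A0) (hC0 : 0 < C0) (hB0C0 : B0 > C0)
    (A B C : ℝ → ℝ) (T : EReal) (hT : 0 < T)
    (hmax : IsMaxSolSL2 A B C T)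
    (hinitA : A 0 = A0) (hinitB : B 0 = B0) (hinitC : C 0 = C0)
    (hF1_0 : A0 / B0 ≤
      1 / 3 * (2 * Real.sqrt (1 - C0 / B0 + (C0 / B0) ^ 2) - 1 - C0 / B0)) :
    ∃ t1 : ℝ, 0 < t1 ∧ (t1 : EReal) < T ∧
      sl2F1 (A t1) (B t1) (C t1) < 0 ∧ sl2F2 (A t1) (B t1) (C t1) < 0 := by
  subst hinitA hinitB hinitC
  have hcone : InSL2Cone (A 0) (B 0) (C 0) :=
    ⟨hA0, hC0, hB0C0.le,
      (sl2F1_nonneg_iff_div_le hA0.le (hC0.trans hB0C0) hC0.le).2 hF1_0⟩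
  obtain ⟨b, hb, hbT, hb_not⟩ := hmax.exists_not_inSL2Cone hT
  have hlt : ∀ t ≤ b, (t : EReal) < T := fun t ht ↦ (EReal.coe_le_coe_iff.2 ht).trans_lt hbT
  have hsol : IsSolSL2 A B C (Icc 0 b) := fun t ht ↦ hmax.1 t ⟨ht.1, hlt t ht.2⟩
  obtain ⟨t, ht, hF1, hF2⟩ := hsol.exists_F1_neg_and_F2_neg_of_not_inSL2Cone hb hcone hb_not
  exact ⟨t, ht.1, hlt t ht.2, hF1, hF2⟩
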